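/- There exists a constant C > 0 such that for every real ε with 0 < ε < 1 there is an n₀ such that for every natural number n ≥ n₀ the following holds with d = ⌈C · (ln n) / ε²⌉: there exist sets E_1, E_2, …, E_n ⊆ {1, …, n} such that (a) |E_i| ≤ (1 + ε) · d for every i; (b) every v ∈ {1, …, n} belongs to at least (1 − ε) · d of the sets E_i; and (c) for every real α ∈ [0, 2] and every index set I ⊆ {1, …, n} with |I| ≤ α · n / d, we have |⋃_{i ∈ I} E_i| ≤ (1 − exp(−α) + ε) · n. -/

import Mathlib

namespace SC
open Finset

lemma sum_pi_prod {ι β : Type*} [Fintype ι] [DecidableEq ι] [Fintype β] (g : ι → β → ℝ) :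
    ∑ f : ι → β, ∏ i, g i (f i) = ∏ i, ∑ b, g i b := by
  rw [Finset.prod_univ_sum, Fintype.piFinset_univ]

/-- Bernoulli weight -/
noncomputable def w (p : ℝ) (b : Bool) : ℝ := if b then p else 1 - p

/-- row weight -/
noncomputable def R {n : ℕ} (p : ℝ) (x : Fin n → Bool) : ℝ := ∏ i, w p (x i)

/-- full weight -/
noncomputable def W {n : ℕ} (p : ℝ) (o : Fin n → Fin n → Bool) : ℝ := ∏ v, R p (o v)

lemma row_prod {n : ℕ} (p : ℝ) (h : Fin n → Bool → ℝ) :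
    ∑ x : Fin n → Bool, R p x * ∏ i, h i (x i) = ∏ i, (p * h i true + (1 - p) * h i false) := by
  have := sum_pi_prod (fun (i : Fin n) b => w p b * h i b)
  simp only [Finset.prod_mul_distrib] at this
  simp only [R]
  rw [this]
  simp [w]

lemma full_prod {n : ℕ} (p : ℝ) (g : Fin n → (Fin n → Bool) → ℝ) :
    ∑ o : Fin n → Fin n → Bool, W p o * ∏ v, g v (o v) = ∏ v, ∑ x, R p x * g v x := by
  have := sum_pi_prod (fun (v : Fin n) x => R p x * g v x)
  simp only [Finset.prod_mul_distrib] at this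
  simp only [W]
  rw [this]

lemma row_one {n : ℕ} (p : ℝ) : ∑ x : Fin n → Bool, R p x = 1 := by
  have := row_prod (n := n) p (fun _ _ => 1)
  simpa using this

lemma full_one {n : ℕ} (p : ℝ) : ∑ o : Fin n → Fin n → Bool, W p o = 1 := by
  have := full_prod (n := n) p (fun _ _ => 1)
  simpa [row_one] using this

lemma W_nonneg {n : ℕ} {p : ℝ} (h0 : 0 ≤ p) (h1 : p ≤ 1) (o : Fin n → Fin n → Bool) :
    0 ≤ W p o := by
  refine Finset.prod_nonneg fun v _ => Finset.prod_nonneg fun i _ => ?_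
  unfold w; split_ifs <;> linarith

lemma row_single {n : ℕ} (p : ℝ) (i : Fin n) (f : Bool → ℝ) :
    ∑ x : Fin n → Bool, R p x * f (x i) = p * f true + (1 - p) * f false := by
  have := row_prod (n := n) p (fun j b => if j = i then f b else 1)
  have h2 : ∀ x : Fin n → Bool, ∏ j, (if j = i then f (x j) else 1) = f (x i) := by
    intro x; simp [Finset.prod_ite_eq']
  simp only [h2] at this
  rw [this]
  rw [Finset.prod_eq_single i]
  · simp
  · intro j _ hj; simp [hj]
  · simp

/-- mgf of column count -/
lemma mgf_col {n : ℕ} (p s : ℝ) (i : Fin n) :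
    ∑ o : Fin n → Fin n → Bool, W p o * Real.exp (s * ((univ.filter fun v => o v i = true).card : ℝ))
      = (1 + p * (Real.exp s - 1)) ^ n := by
  have key : ∀ o : Fin n → Fin n → Bool,
      Real.exp (s * ((univ.filter fun v => o v i = true).card : ℝ))
        = ∏ v, (if o v i = true then Real.exp s else 1) := by
    intro o
    rw [Finset.prod_ite]
    simp [← Real.exp_nat_mul, mul_comm]
  simp only [key]
  rw [full_prod p (fun _ x => if x i = true then Real.exp s else 1)]
  rw [row_single p i (fun b => if b = true then Real.exp s else 1)]
  simp
  ring

lemma mgf_row {n : ℕ} (p s : ℝ) (v : Fin n) :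
    ∑ o : Fin n → Fin n → Bool, W p o * Real.exp (s * ((univ.filter fun i => o v i = true).card : ℝ))
      = (1 + p * (Real.exp s - 1)) ^ n := by
  have key : ∀ x : Fin n → Bool,
      Real.exp (s * ((univ.filter fun i => x i = true).card : ℝ))
        = ∏ i, (if x i = true then Real.exp s else 1) := by
    intro o
    rw [Finset.prod_ite]
    simp [← Real.exp_nat_mul, mul_comm]
  have h := full_prod p (fun u x => if u = v then
    Real.exp (s * ((univ.filter fun i => x i = true).card : ℝ)) else 1)
  simp only [Finset.prod_ite_eq', Finset.mem_univ, if_true] at h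
  rw [h, Finset.prod_eq_single v]
  · simp only [if_true, key]
    rw [row_prod p (fun _ b => if b = true then Real.exp s else 1)]
    simp
    ring
  · intro j _ hj; simp [hj, row_one]
  · simp

lemma mgf_unc {n : ℕ} (p s : ℝ) (I : Finset (Fin n)) :
    ∑ o : Fin n → Fin n → Bool, W p o *
      Real.exp (s * ((univ.filter fun v => ∀ i ∈ I, o v i = false).card : ℝ))
      = (1 + (1 - p) ^ I.card * (Real.exp s - 1)) ^ n := by
  have key : ∀ o : Fin n → Fin n → Bool,
      Real.exp (s * ((univ.filter fun v => ∀ i ∈ I, o v i = false).card : ℝ))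
        = ∏ v, (1 + (Real.exp s - 1) * if (∀ i ∈ I, o v i = false) then 1 else 0) := by
    intro o
    have : ∀ v, (1 + (Real.exp s - 1) * if (∀ i ∈ I, o v i = false) then (1:ℝ) else 0)
       = if (∀ i ∈ I, o v i = false) then Real.exp s else 1 := by
      intro v; split_ifs <;> ring
    simp only [this]
    rw [Finset.prod_ite]
    simp [← Real.exp_nat_mul, mul_comm]
  simp only [key]
  rw [full_prod p (fun _ x => (1 + (Real.exp s - 1) * if (∀ i ∈ I, x i = false) then 1 else 0))]
  have ind : ∀ x : Fin n → Bool, (if (∀ i ∈ I, x i = false) then (1:ℝ) else 0)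
      = ∏ i, if i ∈ I then (if x i = false then 1 else 0) else 1 := by
    intro x
    rw [Finset.prod_ite_mem, Finset.univ_inter, Finset.prod_boole]
    congr 1
  have hrow : ∑ x : Fin n → Bool, R p x * (if (∀ i ∈ I, x i = false) then (1:ℝ) else 0)
      = (1 - p) ^ I.card := by
    simp only [ind]
    rw [row_prod p (fun i b => if i ∈ I then (if b = false then 1 else 0) else 1)]
    have : ∀ i, (p * (if i ∈ I then (if true = false then (1:ℝ) else 0) else 1)
       + (1 - p) * (if i ∈ I then (if false = false then (1:ℝ) else 0) else 1))
       = if i ∈ I then (1 - p) else 1 := by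
      intro i; split_ifs <;> simp_all
    rw [Finset.prod_congr rfl (fun i _ => this i)]
    rw [Finset.prod_ite_mem, Finset.univ_inter]
    simp
  have : ∑ x : Fin n → Bool, R p x * (1 + (Real.exp s - 1) * if (∀ i ∈ I, x i = false) then 1 else 0)
      = 1 + (1 - p) ^ I.card * (Real.exp s - 1) := by
    simp only [mul_add, mul_one, Finset.sum_add_distrib, row_one]
    rw [← hrow, Finset.sum_mul]
    congr 1
    refine Finset.sum_congr rfl fun x _ => by ring
  rw [this]
  simp

lemma pow_le_exp {n : ℕ} {x : ℝ} (h : -1 ≤ x) : (1 + x) ^ n ≤ Real.exp (n * x) := by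
  rw [Real.exp_nat_mul]
  exact pow_le_pow_left₀ (by linarith) (by linarith [Real.add_one_le_exp x]) n

lemma exp_quad {x : ℝ} (h : |x| ≤ 1) : Real.exp x - 1 ≤ x + x ^ 2 := by
  have := abs_le.1 (Real.abs_exp_sub_one_sub_id_le h)
  linarith [this.2]

lemma count_sets (n : ℕ) (hn : 1 ≤ n) (M : ℝ) :
    (((univ : Finset (Finset (Fin n))).filter fun I => (I.card : ℝ) ≤ M).card : ℝ)
      ≤ Real.exp (1 + M * Real.log n) := by
  have hn' : (0:ℝ) < n := by exact_mod_cast hn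
  have h1 : ∑ I : Finset (Fin n), (1 / (n:ℝ)) ^ I.card = (1 + 1 / n) ^ n := by
    have := Fintype.sum_pow_mul_eq_add_pow (Fin n) (1 / (n:ℝ)) 1
    simp at this
    simp [this, add_comm]
  have h2 : (1 + 1 / (n:ℝ)) ^ n ≤ Real.exp 1 := by
    refine (pow_le_exp ?_).trans ?_
    · linarith [show 0 ≤ 1 / (n:ℝ) by positivity]
    · rw [mul_one_div_cancel hn'.ne']
  have h3 : (((univ : Finset (Finset (Fin n))).filter fun I => (I.card : ℝ) ≤ M).card : ℝ)
      ≤ ∑ I : Finset (Fin n), Real.exp (M * Real.log n) * (1 / (n:ℝ)) ^ I.card := by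
    rw [Finset.card_eq_sum_ones, Nat.cast_sum, Finset.sum_filter]
    refine Finset.sum_le_sum fun I _ => ?_
    split_ifs with h
    · have : (1 / (n:ℝ)) ^ I.card = Real.exp (- (I.card * Real.log n)) := by
        rw [Real.exp_neg, Real.exp_nat_mul, Real.exp_log hn']; simp
      rw [this, ← Real.exp_add]
      have : 0 ≤ Real.log n := Real.log_nonneg (by exact_mod_cast hn)
      simp only [Nat.cast_one]
      refine Real.one_le_exp ?_
      nlinarith
    · positivity
  rw [← Finset.mul_sum, h1] at h3
  rw [add_comm, Real.exp_add]
  exact h3.trans (by gcongr)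

lemma q_lower {p : ℝ} (h0 : 0 ≤ p) (h1 : p ≤ 1) {m : ℕ} (hm : m * p ≤ 2) :
    Real.exp (-(m * p)) - 2 * p ≤ (1 - p) ^ m := by
  have a : Real.exp (-p) * (1 - p ^ 2) ≤ 1 - p := by
    have : Real.exp (-p) * (1 + p) ≤ 1 := by
      have := Real.add_one_le_exp p
      calc _ ≤ Real.exp (-p) * Real.exp p := by gcongr; linarith
        _ = 1 := by rw [← Real.exp_add]; simp
    nlinarith
  have b : 1 - m * p ^ 2 ≤ (1 - p ^ 2) ^ m := by
    have := one_add_mul_le_pow (a := -p^2) (by nlinarith) m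
    calc _ = 1 + m * (-p^2) := by ring
      _ ≤ _ := this
      _ = _ := by ring
  have c : Real.exp (-(m * p)) * (1 - p ^ 2) ^ m ≤ (1 - p) ^ m := by
    have : Real.exp (-(m * p)) = Real.exp (-p) ^ m := by rw [← Real.exp_nat_mul]; ring_nf
    rw [this, ← mul_pow]
    exact pow_le_pow_left₀ (mul_nonneg (Real.exp_pos _).le (by nlinarith)) a m
  have e1 : Real.exp (-(m * p)) ≤ 1 := Real.exp_le_one_iff.2 (by have : 0 ≤ m * p := by positivity
                                                                 linarith)
  have e0 := Real.exp_pos (-(m * p))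
  have : Real.exp (-(m * p)) * (m * p ^ 2) ≤ 2 * p := by
    calc _ ≤ 1 * (m * p ^ 2) := by gcongr
      _ = (m * p) * p := by ring
      _ ≤ _ := by gcongr
  nlinarith

lemma core (n d : ℕ) (ε : ℝ) (e0 : 0 < ε) (e1 : ε < 1) (hn : 1 ≤ n) (hd : 1 ≤ d)
    (hp : (d:ℝ) / n ≤ ε / 8) (h2 : n * Real.exp (-(d * ε ^ 2 / 4)) < 1 / 3)
    (h3 : Real.exp (1 + 2 * n / d * Real.log n) * Real.exp (-(n * ε ^ 2 / 8)) < 1 / 3) :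
    ∃ o : Fin n → Fin n → Bool,
      (∀ i, ((univ.filter fun v => o v i = true).card : ℝ) ≤ (1 + ε) * d) ∧
      (∀ v, (1 - ε) * d ≤ ((univ.filter fun i => o v i = true).card : ℝ)) ∧
      (∀ I : Finset (Fin n), (I.card : ℝ) ≤ 2 * n / d →
        (Real.exp (-(I.card * (d / n))) - ε) * n ≤
          ((univ.filter fun v => ∀ i ∈ I, o v i = false).card : ℝ)) := by
  have hn' : (0:ℝ) < n := by exact_mod_cast hn
  have hd' : (0:ℝ) < d := by exact_mod_cast hd
  obtain ⟨p, hpd⟩ : ∃ p : ℝ, p = d / n := ⟨_, rfl⟩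
  rw [← hpd] at hp
  simp only [← hpd]
  have p0 : 0 ≤ p := by rw [hpd]; positivity
  have p1 : p ≤ 1 := by linarith
  have hnp : n * p = d := by rw [hpd]; field_simp
  obtain ⟨s, hs⟩ : ∃ s : ℝ, s = ε / 2 := ⟨_, rfl⟩
  have s0 : 0 < s := by linarith
  have qs : Real.exp s - 1 ≤ s + s ^ 2 := exp_quad (abs_le.2 ⟨by linarith, by linarith⟩)
  have qs' : Real.exp (-s) - 1 ≤ -s + s ^ 2 := by
    have := exp_quad (x := -s) (abs_le.2 ⟨by linarith, by linarith⟩)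
    simpa using this
  let F : Finset (Finset (Fin n)) := univ.filter fun I => (I.card : ℝ) ≤ 2 * n / d
  let A : (Fin n → Fin n → Bool) → Fin n → ℝ := fun o i =>
    Real.exp (s * ((univ.filter fun v => o v i = true).card : ℝ)) * Real.exp (-(s * ((1 + ε) * d)))
  let B : (Fin n → Fin n → Bool) → Fin n → ℝ := fun o v =>
    Real.exp ((-s) * ((univ.filter fun i => o v i = true).card : ℝ)) * Real.exp (s * ((1 - ε) * d))
  let D : (Fin n → Fin n → Bool) → Finset (Fin n) → ℝ := fun o I =>
    Real.exp ((-s) * ((univ.filter fun v => ∀ i ∈ I, o v i = false).card : ℝ)) *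
      Real.exp (s * ((Real.exp (-(I.card * p)) - ε) * n))
  have hA : ∀ i, ∑ o, W p o * A o i ≤ Real.exp (-(d * ε ^ 2 / 4)) := by
    intro i
    simp only [A, ← mul_assoc]
    rw [← Finset.sum_mul, mgf_col]
    have : -1 ≤ p * (Real.exp s - 1) := by nlinarith [Real.add_one_le_exp s]
    refine (mul_le_mul_of_nonneg_right (pow_le_exp this) (Real.exp_pos _).le).trans ?_
    rw [← Real.exp_add, Real.exp_le_exp, ← mul_assoc, hnp]
    have : d * (Real.exp s - 1) ≤ d * (s + s ^ 2) := by gcongr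
    rw [hs] at *
    nlinarith
  have hB : ∀ v, ∑ o, W p o * B o v ≤ Real.exp (-(d * ε ^ 2 / 4)) := by
    intro i
    simp only [B, ← mul_assoc]
    rw [← Finset.sum_mul, mgf_row]
    have : -1 ≤ p * (Real.exp (-s) - 1) := by nlinarith [Real.exp_pos (-s)]
    refine (mul_le_mul_of_nonneg_right (pow_le_exp this) (Real.exp_pos _).le).trans ?_
    rw [← Real.exp_add, Real.exp_le_exp, ← mul_assoc, hnp]
    have : d * (Real.exp (-s) - 1) ≤ d * (-s + s ^ 2) := by gcongr
    rw [hs] at *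
    nlinarith
  have hD : ∀ I ∈ F, ∑ o, W p o * D o I ≤ Real.exp (-(n * ε ^ 2 / 8)) := by
    intro I hI
    have hI : (I.card : ℝ) ≤ 2 * n / d := by simpa [F] using hI
    have hm : I.card * p ≤ 2 := by
      rw [le_div_iff₀ hd'] at hI
      rw [hpd, ← mul_div_assoc, div_le_iff₀ hn']
      exact hI
    have q1 := q_lower p0 p1 hm
    have q0 : 0 ≤ (1 - p) ^ I.card := pow_nonneg (by linarith) _
    have q2 : (1 - p) ^ I.card ≤ 1 := pow_le_one₀ (by linarith) (by linarith)
    simp only [D, ← mul_assoc]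
    rw [← Finset.sum_mul, mgf_unc]
    generalize (1 - p) ^ I.card = q at *
    generalize Real.exp (-(I.card * p)) = x at *
    have : -1 ≤ q * (Real.exp (-s) - 1) := by nlinarith [Real.exp_pos (-s)]
    refine (mul_le_mul_of_nonneg_right (pow_le_exp this) (Real.exp_pos _).le).trans ?_
    rw [← Real.exp_add, Real.exp_le_exp]
    have k1 : q * (Real.exp (-s) - 1) ≤ q * (-s + s ^ 2) := by gcongr
    have k2 : q * s ^ 2 ≤ 1 * s ^ 2 := by gcongr
    have k3 : s * (x - 2 * p) ≤ s * q := by gcongr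
    have k4 : s * p ≤ s * (ε / 8) := by gcongr
    have k5 : q * (Real.exp (-s) - 1) + s * (x - ε) ≤ - (ε ^ 2 / 8) := by
      rw [hs] at *
      nlinarith
    have := mul_le_mul_of_nonneg_left k5 hn'.le
    nlinarith
  have tot : ∑ o, W p o * (∑ i, A o i + ∑ v, B o v + ∑ I ∈ F, D o I) < ∑ o : Fin n → Fin n → Bool, W p o := by
    rw [full_one]
    simp only [mul_add, Finset.mul_sum, Finset.sum_add_distrib]
    rw [Finset.sum_comm, Finset.sum_comm (f := fun o v => W p o * B o v),
      Finset.sum_comm (f := fun o I => W p o * D o I)]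
    have a := Finset.sum_le_sum fun i (_ : i ∈ (univ : Finset (Fin n))) => hA i
    have b := Finset.sum_le_sum fun i (_ : i ∈ (univ : Finset (Fin n))) => hB i
    have c := Finset.sum_le_sum hD
    simp only [Finset.sum_const, Finset.card_univ, Fintype.card_fin, nsmul_eq_mul] at a b c
    have c2 : (F.card : ℝ) * Real.exp (-(n * ε ^ 2 / 8)) ≤ _ :=
      mul_le_mul_of_nonneg_right (count_sets n hn (2 * n / d)) (Real.exp_pos _).le
    linarith
  obtain ⟨o, -, ho⟩ := Finset.exists_lt_of_sum_lt tot
  have W0 := W_nonneg p0 p1 o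
  have Apos : ∀ i, 0 < A o i := fun i => by positivity
  have Bpos : ∀ i, 0 < B o i := fun i => by positivity
  have Dpos : ∀ i, 0 < D o i := fun i => by positivity
  have a0 : 0 ≤ ∑ i, A o i := Finset.sum_nonneg fun i _ => (Apos i).le
  have b0 : 0 ≤ ∑ i, B o i := Finset.sum_nonneg fun i _ => (Bpos i).le
  have c0 : 0 ≤ ∑ I ∈ F, D o I := Finset.sum_nonneg fun i _ => (Dpos i).le
  have lt1 : ∑ i, A o i + ∑ v, B o v + ∑ I ∈ F, D o I < 1 := by
    by_contra! h
    nlinarith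
  refine ⟨o, fun i => ?_, fun v => ?_, fun I hI => ?_⟩
  · have := Finset.single_le_sum (fun i _ => (Apos i).le) (Finset.mem_univ i)
    have h : A o i < 1 := by linarith
    simp only [A] at h
    rw [← Real.exp_add, Real.exp_lt_one_iff] at h
    refine le_of_mul_le_mul_left ?_ s0
    linarith
  · have := Finset.single_le_sum (fun i _ => (Bpos i).le) (Finset.mem_univ v)
    have h : B o v < 1 := by linarith
    simp only [B] at h
    rw [← Real.exp_add, Real.exp_lt_one_iff] at h
    refine le_of_mul_le_mul_left ?_ s0
    linarith
  · clear hA hB hD tot ho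
    have := Finset.single_le_sum (fun i _ => (Dpos i).le) (show I ∈ F by simpa [F] using hI)
    have h : D o I < 1 := by linarith
    simp only [D] at h
    rw [← Real.exp_add, Real.exp_lt_one_iff] at h
    refine le_of_mul_le_mul_left ?_ s0
    linarith

lemma asym (ε : ℝ) (e0 : 0 < ε) (e1 : ε < 1) : ∃ n₀ : ℕ, ∀ n : ℕ, n₀ ≤ n →
    ∀ d : ℕ, d = ⌈32 * Real.log n / ε ^ 2⌉₊ → 1 ≤ n ∧ 1 ≤ d ∧ (d:ℝ) / n ≤ ε / 8 ∧
    n * Real.exp (-(d * ε ^ 2 / 4)) < 1 / 3 ∧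
    Real.exp (1 + 2 * n / d * Real.log n) * Real.exp (-(n * ε ^ 2 / 8)) < 1 / 3 := by
  have ev1 : ∀ᶠ n : ℕ in Filter.atTop, Real.log n ≤ ε ^ 3 / 512 * n := by
    have := (Real.isLittleO_log_id_atTop.comp_tendsto
      (tendsto_natCast_atTop_atTop (R := ℝ))).bound (c := ε ^ 3 / 512) (by positivity)
    filter_upwards [this] with n h
    simp only [Function.comp, id, Real.norm_eq_abs, Nat.abs_cast] at h
    exact (le_abs_self _).trans h
  obtain ⟨N, hN⟩ := Filter.eventually_atTop.1 (ev1.and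
    ((Filter.eventually_ge_atTop 2).and ((tendsto_natCast_atTop_atTop (R := ℝ)).eventually_ge_atTop (64 / ε ^ 2))))
  refine ⟨N, fun n hn d hd => ?_⟩
  obtain ⟨hl, h2, h64⟩ := hN n hn
  have h2' : (2:ℝ) ≤ n := by exact_mod_cast h2
  have hn0 : (0:ℝ) < n := by linarith
  have lpos : 0 < Real.log n := Real.log_pos (by linarith)
  have h64' : 64 ≤ n * ε ^ 2 := by rwa [div_le_iff₀ (by positivity)] at h64
  have dpos : 1 ≤ d := by rw [hd, Nat.one_le_ceil_iff]; positivity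
  have dpos' : (0:ℝ) < d := by exact_mod_cast dpos
  have dlo : 32 * Real.log n / ε ^ 2 ≤ d := by rw [hd]; exact Nat.le_ceil _
  have dhi : (d:ℝ) < 32 * Real.log n / ε ^ 2 + 1 := by
    rw [hd]; exact Nat.ceil_lt_add_one (by positivity)
  have dlo' : 32 * Real.log n ≤ d * ε ^ 2 := by rwa [div_le_iff₀ (by positivity)] at dlo
  refine ⟨by omega, dpos, ?_, ?_, ?_⟩
  · rw [div_le_iff₀ hn0]
    have : 32 * Real.log n / ε ^ 2 ≤ ε / 16 * n := by
      rw [div_le_iff₀ (by positivity)]; nlinarith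
    have l2 : Real.log 2 ≤ Real.log n := Real.log_le_log (by norm_num) h2'
    have : 1 ≤ 32 * Real.log n / ε ^ 2 := by
      rw [le_div_iff₀ (by positivity)]
      nlinarith [Real.log_two_gt_d9]
    linarith
  · have : Real.exp (-(d * ε ^ 2 / 4)) ≤ Real.exp (-(3 * Real.log n)) := by
      rw [Real.exp_le_exp]; linarith
    have e : Real.exp (-(3 * Real.log n)) = 1 / (n:ℝ) ^ 3 := by
      rw [Real.exp_neg, show 3 * Real.log n = (3:ℕ) * Real.log n by norm_num, Real.exp_nat_mul,
        Real.exp_log hn0]; simp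
    calc _ ≤ n * (1 / (n:ℝ) ^ 3) := by rw [← e]; gcongr
      _ = 1 / (n:ℝ) ^ 2 := by field_simp
      _ < _ := by
        apply one_div_lt_one_div_of_lt <;> nlinarith
  · rw [← Real.exp_add]
    have : 2 * n / d * Real.log n ≤ n * ε ^ 2 / 16 := by
      rw [div_mul_eq_mul_div, div_le_iff₀ dpos']
      nlinarith
    have : Real.exp (1 + 2 * n / d * Real.log n + -(n * ε ^ 2 / 8)) ≤ Real.exp (-3) := by
      rw [Real.exp_le_exp]; linarith
    refine this.trans_lt ?_
    rw [Real.exp_neg, one_div]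
    apply inv_strictAnti₀ (by norm_num)
    linarith [Real.add_one_lt_exp (x := 3) (by norm_num)]

end SC


/-- there is a constant `C > 0` such that for every `0 < ε < 1` and
every large enough `n`, with `d = ⌈C ln n / ε²⌉`, there exist sets
`E₁, …, Eₙ ⊆ [n]` with (a) `|Eᵢ| ≤ (1 + ε) d` for all `i`; (b) every `v ∈ [n]`
belongs to at least `(1 − ε) d` of the `Eᵢ`; (c) for all `α ∈ [0, 2]` and all
`I ⊆ [n]` with `|I| ≤ α n / d`, `|⋃_{i ∈ I} Eᵢ| ≤ (1 − e^{−α} + ε) n`. -/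
theorem setCover_gap_instance : ∃ C : ℝ, 0 < C ∧
    ∀ ε : ℝ, 0 < ε → ε < 1 → ∃ n₀ : ℕ, ∀ n : ℕ, n₀ ≤ n →
      ∀ d : ℕ, d = ⌈C * Real.log n / ε ^ 2⌉₊ →
        ∃ Esets : Fin n → Finset (Fin n),
          (∀ i : Fin n, ((Esets i).card : ℝ) ≤ (1 + ε) * d) ∧
          (∀ v : Fin n,
            ((1 - ε) * d : ℝ) ≤ ((Finset.univ.filter fun i : Fin n => v ∈ Esets i).card : ℝ)) ∧
          (∀ α : ℝ, 0 ≤ α → α ≤ 2 → ∀ I : Finset (Fin n), (I.card : ℝ) ≤ α * n / d →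
            (((I.biUnion Esets).card : ℝ) ≤ (1 - Real.exp (-α) + ε) * n)) := by
  refine ⟨32, by norm_num, fun ε e0 e1 => ?_⟩
  obtain ⟨N, hN⟩ := SC.asym ε e0 e1
  refine ⟨N, fun n hn d hd => ?_⟩
  obtain ⟨h1, h2, h3, h4, h5⟩ := hN n hn d hd
  obtain ⟨o, ha, hb, hc⟩ := SC.core n d ε e0 e1 h1 h2 h3 h4 h5
  have hn0 : (0:ℝ) < n := by exact_mod_cast h1
  have hd0 : (0:ℝ) < d := by exact_mod_cast h2
  refine ⟨fun i => Finset.univ.filter fun v => o v i = true, ha, ?_, ?_⟩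
  · intro v
    simpa using hb v
  · intro α a0 a2 I hI
    have hI2 : (I.card : ℝ) ≤ 2 * n / d := hI.trans (by gcongr)
    have h := hc I hI2
    have hm : I.card * ((d:ℝ) / n) ≤ α := by
      rw [le_div_iff₀ hd0] at hI
      rw [← mul_div_assoc, div_le_iff₀ hn0]
      exact hI
    have hexp : Real.exp (-α) ≤ Real.exp (-(I.card * ((d:ℝ) / n))) :=
      Real.exp_le_exp.2 (by linarith)
    have hU : (I.biUnion fun i => Finset.univ.filter fun v => o v i = true)
        = (Finset.univ.filter fun v => ∀ i ∈ I, o v i = false)ᶜ := by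
      ext v; simp
    rw [hU, Finset.card_compl, Fintype.card_fin, Nat.cast_sub (by
      simpa using Finset.card_le_univ (Finset.univ.filter fun v => ∀ i ∈ I, o v i = false))]
    nlinarith
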